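/- AG(3,3) can be partitioned into three pairwise disjoint maximal caps; moreover, for every maximal cap C in AG(3,3) there is exactly one unordered pair {D, E} of maximal caps such that C, D, E are pairwise disjoint and C ∪ D ∪ E is all of AG(3,3). (Every maximal cap of AG(3,3) lies in a unique such partition.) -/

import Mathlib

/-- A cap in `AG(n,3)`: a finite set of points of `Fin n → ZMod 3` containing no
three distinct collinear points (three distinct points are collinear iff they sum to zero). -/
def IsCap {n : ℕ} (C : Finset (Fin n → ZMod 3)) : Prop :=
  ∀ x ∈ C, ∀ y ∈ C, ∀ z ∈ C, x ≠ y → x ≠ z → y ≠ z → x + y + z ≠ 0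

/-- A maximal cap: a cap of largest possible size. -/
def MaximalCap {n : ℕ} (C : Finset (Fin n → ZMod 3)) : Prop :=
  IsCap C ∧ ∀ D : Finset (Fin n → ZMod 3), IsCap D → D.card ≤ C.card

/-!
In characteristic 3 the third point of a line is the midpoint of the other two. If `r` lies
outside a cap with at least nine points, then it is the midpoint of at most two chords: three
chords would form an octahedron, and a cap containing an octahedron has at most eight points.
Counting chords by their midpoints, a cap of `AG(3,3)` has at most nine points, and each point
outside a nine-point cap is the midpoint of exactly two chords. The plane spanned by these two
chords meets the cap in their four ends only; counting the chords with midpoint in this plane shows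
that the two parallel planes contain one and four points of the cap. With the isolated point as
origin, the cap becomes the elliptic paraboloid `z = x ^ 2 + y ^ 2`, whose vertical translates
complete a partition.

Conversely, let caps `D` and `E` cover the complement of the paraboloid. Since `x ^ 2 + y ^ 2` is
anisotropic, a tangent plane meets the paraboloid only at the point of tangency `p`, and two caps
can cover such a punctured plane only if each is symmetric about `p`. Two such symmetries suffice
to join any two points of a translate of the paraboloid, so `D` and `E` are translates.
-/

open Finset

/-- The points of the affine space `AG(n,3)`. -/
abbrev AG (n : ℕ) : Type := Fin n → ZMod 3

theorem zmod_three_eq_zero : (3 : ZMod 3) = 0 := by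
  decide

theorem AG.three_eq_zero {n : ℕ} : (3 : AG n) = 0 :=
  funext fun _ ↦ zmod_three_eq_zero

theorem zmod_three_cases (a : ZMod 3) : a = 0 ∨ a = 1 ∨ a = -1 := by
  decide +revert

section AffineSpace

variable {n : ℕ} {C D E : Finset (AG n)} {p r u v w x y z : AG n}

theorem IsCap.eq_of_add_add_eq_zero (hC : IsCap C) (hx : x ∈ C) (hy : y ∈ C) (hz : z ∈ C)
    (h : x + y + z = 0) : x = y := by
  by_contra hxy
  refine hC x hx y hy z hz hxy ?_ ?_ h <;> rintro rfl <;> apply hxy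
  · linear_combination x * AG.three_eq_zero - h
  · linear_combination h - y * AG.three_eq_zero

theorem isCap_iff : IsCap C ↔ ∀ x ∈ C, ∀ y ∈ C, ∀ z ∈ C, x + y + z = 0 → x = y :=
  ⟨fun hC _ hx _ hy _ hz ↦ hC.eq_of_add_add_eq_zero hx hy hz,
    fun h x hx y hy z hz hxy _ _ h0 ↦ hxy (h x hx y hy z hz h0)⟩

theorem affineEquiv_add_add_eq (φ : AG n ≃ᵃ[ZMod 3] AG n) (x y z : AG n) :
    φ x + φ y + φ z = φ.linear (x + y + z) := by
  have key (q : AG n) : φ q = φ.linear q + φ 0 := by simpa using φ.map_vadd 0 q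
  rw [key x, key y, key z, map_add, map_add]
  linear_combination φ 0 * AG.three_eq_zero

theorem isCap_map_iff (φ : AG n ≃ᵃ[ZMod 3] AG n) :
    IsCap (C.map φ.toEquiv.toEmbedding) ↔ IsCap C := by
  simp only [isCap_iff, forall_mem_map, Equiv.coe_toEmbedding, AffineEquiv.coe_toEquiv,
    affineEquiv_add_add_eq, EmbeddingLike.map_eq_zero_iff, φ.injective.eq_iff]

theorem maximalCap_map_iff (φ : AG n ≃ᵃ[ZMod 3] AG n) :
    MaximalCap (C.map φ.toEquiv.toEmbedding) ↔ MaximalCap C := by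
  simp only [MaximalCap, isCap_map_iff, card_map]

theorem mem_map_symm_iff (φ : AG n ≃ᵃ[ZMod 3] AG n) :
    x ∈ C.map φ.symm.toEquiv.toEmbedding ↔ φ x ∈ C :=
  mem_map_equiv

theorem exists_affineEquiv {b : Fin n → AG n} (hb : LinearIndependent (ZMod 3) b) (p : AG n) :
    ∃ φ : AG n ≃ᵃ[ZMod 3] AG n, ∀ x, φ x = p + ∑ i, x i • b i := by
  let B := Module.Basis.mk hb
    (hb.span_eq_top_of_card_eq_finrank' (by simp)).ge
  refine ⟨B.equivFun.symm.toAffineEquiv.trans (AffineEquiv.constVAdd _ _ p), fun x ↦ ?_⟩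
  simp [B, Module.Basis.equivFun_symm_apply]

/-- The vectors `u` such that `r` is the midpoint of the points `r + u` and `r - u` of `C`.
In characteristic 3, the midpoint of two points is the third point of the line joining them. -/
def halfChords (C : Finset (AG n)) (r : AG n) : Finset (AG n) :=
  {u | r + u ∈ C ∧ r - u ∈ C}

theorem mem_halfChords : u ∈ halfChords C r ↔ r + u ∈ C ∧ r - u ∈ C := by
  simp [halfChords]

theorem ne_zero_of_mem_halfChords (hr : r ∉ C) (hu : u ∈ halfChords C r) : u ≠ 0 := by
  rintro rfl
  exact hr (by simpa using (mem_halfChords.1 hu).1)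

theorem IsCap.halfChords_of_mem (hC : IsCap C) (hr : r ∈ C) : halfChords C r = {0} := by
  ext u
  rw [mem_halfChords, mem_singleton]
  refine ⟨fun ⟨hadd, hsub⟩ ↦ ?_, by rintro rfl; simpa⟩
  have h := hC.eq_of_add_add_eq_zero hr hadd hsub
    (by linear_combination r * AG.three_eq_zero)
  simpa using h.symm

theorem card_halfChords (C : Finset (AG n)) (r : AG n) :
    #(halfChords C r) = #{q ∈ C ×ˢ C | -(q.1 + q.2) = r} := by
  refine card_nbij' (fun u ↦ (r + u, r - u)) (fun q ↦ q.1 - r) ?_ ?_ ?_ ?_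
  · intro u hu
    have hr : -(r + u + (r - u)) = r := by linear_combination -r * AG.three_eq_zero
    exact mem_coe.2 (mem_filter.2 ⟨mem_product.2 (mem_halfChords.1 hu), hr⟩)
  · rintro ⟨x, y⟩ h
    obtain ⟨⟨hx, hy⟩, rfl⟩ : (x ∈ C ∧ y ∈ C) ∧ -(x + y) = r := by simpa using h
    have hy' : -(x + y) - (x - -(x + y)) = y := by
      linear_combination -(x + y) * AG.three_eq_zero
    exact mem_coe.2 (mem_halfChords.2 ⟨by simpa using hx, hy'.symm ▸ hy⟩)
  · intro u _
    exact add_sub_cancel_left r u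
  · rintro ⟨x, y⟩ h
    obtain ⟨-, rfl⟩ : (x ∈ C ∧ y ∈ C) ∧ -(x + y) = r := by simpa using h
    exact Prod.ext (add_sub_cancel _ _)
      (by linear_combination -(x + y) * AG.three_eq_zero)

theorem sum_card_halfChords (C S : Finset (AG n)) :
    ∑ r ∈ S, #(halfChords C r) = #{q ∈ C ×ˢ C | -(q.1 + q.2) ∈ S} := by
  have hmaps : Set.MapsTo (fun q : AG n × AG n ↦ -(q.1 + q.2))
      ({q ∈ C ×ˢ C | -(q.1 + q.2) ∈ S} : Finset _) S := fun _ hq ↦ (mem_filter.1 hq).2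
  rw [card_eq_sum_card_fiberwise hmaps]
  refine sum_congr rfl fun r hr ↦ ?_
  rw [card_halfChords, filter_filter]
  exact congrArg card (filter_congr fun q _ ↦ ⟨fun h ↦ ⟨h ▸ hr, h⟩, And.right⟩)

theorem IsCap.sum_card_halfChords_compl (hC : IsCap C) :
    ∑ r ∈ Cᶜ, #(halfChords C r) + #C = #C ^ 2 := by
  have hCsum : ∑ r ∈ C, #(halfChords C r) = #C := by
    rw [card_eq_sum_ones]
    exact sum_congr rfl fun r hr ↦ by rw [hC.halfChords_of_mem hr, card_singleton]
  calc ∑ r ∈ Cᶜ, #(halfChords C r) + #C = ∑ r, #(halfChords C r) := by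
        rw [← sum_compl_add_sum C, hCsum]
    _ = #C ^ 2 := by simp [sum_card_halfChords, sq]

theorem IsCap.coeff_eq_zero_of_add_mem (hC : IsCap C) (hu : u ∈ halfChords C r)
    (hv : v ∈ halfChords C r) (huv : LinearIndependent (ZMod 3) ![u, v]) {a b : ZMod 3}
    (hw : r + (a • u + b • v) ∈ C) : a = 0 ∨ b = 0 := by
  have hmem {t : AG n} (ht : t ∈ halfChords C r) {c : ZMod 3} (hc : c ≠ 0) :
      r - c • t ∈ C := by
    rw [mem_halfChords] at ht
    rcases zmod_three_cases c with rfl | rfl | rfl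
    · exact absurd rfl hc
    · simpa using ht.2
    · simpa using ht.1
  by_contra! h
  have heq := hC.eq_of_add_add_eq_zero (hmem hu h.1) (hmem hv h.2) hw
    (by linear_combination r * AG.three_eq_zero)
  refine h.1 (LinearIndependent.pair_iff.1 huv a (-b) ?_).1
  rw [neg_smul, ← sub_eq_add_neg, sub_eq_zero]
  simpa using heq

theorem linearIndependent_of_mem_halfChords (hr : r ∉ C) (hu : u ∈ halfChords C r)
    (hv : v ∈ halfChords C r) (hvu : v ≠ u) (hvu' : v ≠ -u) :
    LinearIndependent (ZMod 3) ![u, v] := by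
  rw [LinearIndependent.pair_iff' (ne_zero_of_mem_halfChords hr hu)]
  rintro a rfl
  rcases zmod_three_cases a with rfl | rfl | rfl
  · exact ne_zero_of_mem_halfChords hr hv (zero_smul _ _)
  · exact hvu (one_smul _ _)
  · exact hvu' (neg_one_smul _ _)

theorem exists_linearIndependent_of_mem_halfChords (hr : r ∉ C) (h : 2 < #(halfChords C r)) :
    ∃ u ∈ halfChords C r, ∃ v ∈ halfChords C r, LinearIndependent (ZMod 3) ![u, v] := by
  obtain ⟨u, hu⟩ : (halfChords C r).Nonempty := card_pos.1 (by lia)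
  obtain ⟨v, hv, hvu⟩ : ∃ v ∈ halfChords C r, v ∉ ({u, -u} : Finset (AG n)) :=
    exists_mem_notMem_of_card_lt_card (card_le_two.trans_lt h)
  simp only [mem_insert, mem_singleton, not_or] at hvu
  exact ⟨u, hu, v, hv, linearIndependent_of_mem_halfChords hr hu hv hvu.1 hvu.2⟩

theorem IsCap.notMem_span_pair (hC : IsCap C) (hr : r ∉ C) (hu : u ∈ halfChords C r)
    (hv : v ∈ halfChords C r) (hw : w ∈ halfChords C r)
    (huv : LinearIndependent (ZMod 3) ![u, v]) (hwu : w ≠ u) (hwu' : w ≠ -u) (hwv : w ≠ v)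
    (hwv' : w ≠ -v) : w ∉ Submodule.span (ZMod 3) {u, v} := by
  intro hspan
  obtain ⟨a, b, rfl⟩ := Submodule.mem_span_pair.1 hspan
  have hw0 := ne_zero_of_mem_halfChords hr hw
  rcases hC.coeff_eq_zero_of_add_mem hu hv huv (mem_halfChords.1 hw).1 with rfl | rfl
  · rcases zmod_three_cases b with rfl | rfl | rfl <;> simp_all
  · rcases zmod_three_cases a with rfl | rfl | rfl <;> simp_all

/-- The point with coordinates `s` in the plane through `p` directed by `u` and `v`. -/
def planePoint (p u v : AG n) (s : ZMod 3 × ZMod 3) : AG n := p + (s.1 • u + s.2 • v)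

theorem planePoint_add_add (p u v : AG n) {q s t : ZMod 3 × ZMod 3} (h : q + s + t = 0) :
    planePoint p u v q + planePoint p u v s + planePoint p u v t = 0 := by
  obtain rfl : t = -(q + s) := (neg_eq_of_add_eq_zero_right h).symm
  simp only [planePoint, Prod.fst_neg, Prod.snd_neg, Prod.fst_add, Prod.snd_add, neg_smul,
    add_smul]
  linear_combination p * AG.three_eq_zero

theorem planePoint_injective (hp : p ∉ C) (hplane : ∀ s ≠ 0, planePoint p u v s ∈ C) :
    Function.Injective (planePoint p u v) := by
  intro s t hst
  by_contra hne
  suffices h : planePoint p u v (s - t) = p from hp (h ▸ hplane _ (sub_ne_zero.2 hne))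
  simp only [planePoint, Prod.fst_sub, Prod.snd_sub, sub_smul] at hst ⊢
  linear_combination hst

theorem IsCap.planePoint_mem_right (hD : IsCap D) (hp : p ∉ D ∪ E)
    (hplane : ∀ s ≠ 0, planePoint p u v s ∈ D ∪ E) {q s t : ZMod 3 × ZMod 3}
    (hq : planePoint p u v q ∈ D) (hs : planePoint p u v s ∈ D) (hqs : q ≠ s)
    (hsum : q + s + t = 0) (ht : t ≠ 0) : planePoint p u v t ∈ E := by
  refine (mem_union.1 (hplane t ht)).resolve_left fun htD ↦ hqs ?_
  exact planePoint_injective hp hplane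
    (hD.eq_of_add_add_eq_zero hq hs htD (planePoint_add_add p u v hsum))

theorem IsCap.planePoint_neg_notMem (hD : IsCap D) (hE : IsCap E) (hp : p ∉ D ∪ E)
    (hplane : ∀ s ≠ 0, planePoint p u v s ∈ D ∪ E) (hu : planePoint p u v (1, 0) ∈ D)
    (hv : planePoint p u v (0, 1) ∈ D) : planePoint p u v (-1, 0) ∉ E := by
  intro hu'
  have toE {q s t} (hq : planePoint p u v q ∈ D) (hs : planePoint p u v s ∈ D) :
      q ≠ s → q + s + t = 0 → t ≠ 0 → planePoint p u v t ∈ E :=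
    hD.planePoint_mem_right hp hplane hq hs
  have toD {q s t} (hq : planePoint p u v q ∈ E) (hs : planePoint p u v s ∈ E) :
      q ≠ s → q + s + t = 0 → t ≠ 0 → planePoint p u v t ∈ D := by
    rw [union_comm] at hp hplane
    exact hE.planePoint_mem_right hp hplane hq hs
  have h₁ : planePoint p u v (-1, -1) ∈ E := toE hu hv (by decide) (by decide) (by decide)
  have h₂ : planePoint p u v (-1, 1) ∈ D := toD hu' h₁ (by decide) (by decide) (by decide)
  have h₃ : planePoint p u v (0, -1) ∈ E := toE hu h₂ (by decide) (by decide) (by decide)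
  have h₄ : planePoint p u v (1, 1) ∈ D := toD hu' h₃ (by decide) (by decide) (by decide)
  have heq := hD.eq_of_add_add_eq_zero hv h₂ h₄ (planePoint_add_add p u v (by decide))
  exact absurd (planePoint_injective hp hplane heq) (by decide)

theorem planePoint_neg_left (s : ZMod 3 × ZMod 3) :
    planePoint p (-u) v s = planePoint p u v (-s.1, s.2) := by
  simp [planePoint]

theorem IsCap.sub_mem_of_add_mem (hD : IsCap D) (hE : IsCap E) (hp : p ∉ D ∪ E)
    (hplane : ∀ s ≠ 0, planePoint p u v s ∈ D ∪ E) (hu : p + u ∈ D) : p - u ∈ D := by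
  have hadd : p + u = planePoint p u v (1, 0) := by simp [planePoint]
  have hsub : p - u = planePoint p u v (-1, 0) := by simp [planePoint, sub_eq_add_neg]
  rw [hadd] at hu
  rw [hsub]
  refine (mem_union.1 (hplane (-1, 0) (by decide))).resolve_right fun hu' ↦ ?_
  rcases mem_union.1 (hplane (0, 1) (by decide)) with hv | hv
  · exact hD.planePoint_neg_notMem hE hp hplane hu hv hu'
  · rw [union_comm] at hp hplane
    refine hE.planePoint_neg_notMem (u := -u) (v := v) hD hp (fun s hs ↦ ?_) ?_ ?_ ?_ <;>
      rw [planePoint_neg_left]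
    · exact hplane _ fun h ↦ hs (by simpa [Prod.ext_iff] using h)
    · exact hu'
    · simpa using hv
    · simpa using hu

/-- The set `P` completes `C` to a partition of `AG(n,3)` into three maximal caps. -/
def IsCapCompletion (C : Finset (AG n)) (P : Finset (Finset (AG n))) : Prop :=
  #P = 2 ∧ (∀ D ∈ P, MaximalCap D ∧ Disjoint C D) ∧
    (∀ D ∈ P, ∀ E ∈ P, D ≠ E → Disjoint D E) ∧ C ∪ P.sup id = univ

theorem isCapCompletion_pair (hDE : D ≠ E) :
    IsCapCompletion C {D, E} ↔ MaximalCap D ∧ MaximalCap E ∧ Disjoint C D ∧ Disjoint C E ∧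
      Disjoint D E ∧ C ∪ (D ∪ E) = univ := by
  simp only [IsCapCompletion, card_pair hDE, mem_insert, mem_singleton, forall_eq_or_imp,
    forall_eq, ne_eq, not_true_eq_false, IsEmpty.forall_iff, hDE, hDE.symm, not_false_eq_true,
    forall_const, true_and, and_true, disjoint_comm (a := E) (b := D), and_self, sup_insert,
    id_eq, sup_singleton, sup_eq_union]
  tauto

theorem isCapCompletion_map_iff (φ : AG n ≃ᵃ[ZMod 3] AG n) {P : Finset (Finset (AG n))} :
    IsCapCompletion (C.map φ.toEquiv.toEmbedding)
      (φ.toEquiv.finsetCongr.finsetCongr P) ↔ IsCapCompletion C P := by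
  have hcover : C.map φ.toEquiv.toEmbedding ∪
      (φ.toEquiv.finsetCongr.finsetCongr P).sup id = univ ↔ C ∪ P.sup id = univ := by
    rw [eq_univ_iff_forall, eq_univ_iff_forall, φ.surjective.forall]
    simp [mem_sup]
  rw [IsCapCompletion, IsCapCompletion, hcover]
  simp only [Equiv.finsetCongr_apply, card_map, forall_mem_map, Equiv.coe_toEmbedding,
    maximalCap_map_iff, disjoint_map, ne_eq, map_inj]

end AffineSpace

section AffineThreeSpace

variable {C D E : Finset (AG 3)} {p r x y : AG 3} {a b c d t : ZMod 3}

/-- The height of a point above the elliptic paraboloid `z = x ^ 2 + y ^ 2`. -/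
def height (x : AG 3) : ZMod 3 := x 2 - x 0 ^ 2 - x 1 ^ 2

/-- The elliptic paraboloid `z = x ^ 2 + y ^ 2 + c`. -/
def paraboloid (c : ZMod 3) : Finset (AG 3) := {x | height x = c}

theorem mem_paraboloid : x ∈ paraboloid c ↔ height x = c := by
  simp [paraboloid]

theorem card_paraboloid (c : ZMod 3) : #(paraboloid c) = 9 := by
  decide +kernel +revert

theorem disjoint_paraboloid_iff : Disjoint (paraboloid c) (paraboloid d) ↔ c ≠ d := by
  refine ⟨?_, fun h ↦ disjoint_filter.2 fun _ _ hc hd ↦ h (hc.symm.trans hd)⟩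
  rintro h rfl
  have hcard := card_paraboloid c
  simp [disjoint_self.1 h] at hcard

theorem union_paraboloid : paraboloid 0 ∪ (paraboloid 1 ∪ paraboloid (-1)) = univ := by
  ext x
  simpa [mem_paraboloid] using zmod_three_cases (height x)

theorem sq_add_sq_eq_zero : a ^ 2 + b ^ 2 = 0 → a = 0 ∧ b = 0 := by
  decide +revert

theorem isCap_paraboloid (c : ZMod 3) : IsCap (paraboloid c) := by
  refine isCap_iff.2 fun x hx y hy z hz h ↦ ?_
  rw [mem_paraboloid, height] at hx hy hz
  obtain rfl : z = -(x + y) := (neg_eq_of_add_eq_zero_right h).symm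
  simp only [Pi.neg_apply, Pi.add_apply] at hz
  -- The three equations add up to `x 0 ^ 2 + x 0 * y 0 + y 0 ^ 2 = (x 0 - y 0) ^ 2` and its
  -- analogue for the second coordinate.
  obtain ⟨h0, h1⟩ : x 0 - y 0 = 0 ∧ x 1 - y 1 = 0 := by
    apply sq_add_sq_eq_zero
    linear_combination hx + hy + hz +
      (c + (x 0 - y 0) ^ 2 + (x 1 - y 1) ^ 2 + 2 * x 0 * y 0 + 2 * x 1 * y 1) * zmod_three_eq_zero
  rw [sub_eq_zero] at h0 h1
  ext i
  fin_cases i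
  · exact h0
  · exact h1
  · change x 2 = y 2
    rw [h0, h1] at hx
    linear_combination hx - hy

theorem exists_single_of_exists_eq_zero (h0 : ∃ i, x i = 0)
    (h1 : ∀ i, ∀ a ≠ 0, x ≠ Pi.single i a) :
    ∃ i j, ∃ a ≠ 0, ∃ b ≠ 0, (Pi.single i a : AG 3) ≠ Pi.single j b ∧
      Pi.single i a + Pi.single j b + x = 0 := by
  decide +kernel +revert

theorem exists_single_of_prod_eq (hx : ∀ i, x i ≠ 0) (hy : ∀ i, y i ≠ 0)
    (hprod : ∏ i, x i = ∏ i, y i) (hxy : x ≠ y) :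
    ∃ i, ∃ a ≠ 0, x + y + Pi.single i a = 0 := by
  decide +kernel +revert

theorem card_singles : #{x : AG 3 | ∃ i, ∃ a ≠ 0, x = Pi.single i a} = 6 := by
  decide +kernel

theorem IsCap.card_le_eight_of_singles_mem (hC : IsCap C)
    (h : ∀ i, ∀ a ≠ 0, Pi.single i a ∈ C) : #C ≤ 8 := by
  have hsingles : {x ∈ C | ∃ i, x i = 0} ⊆
      ({x | ∃ i, ∃ a ≠ 0, x = Pi.single i a} : Finset (AG 3)) := by
    intro x hx
    obtain ⟨hxC, hx0⟩ := mem_filter.1 hx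
    by_contra hx1
    obtain ⟨i, j, a, ha, b, hb, hab, hsum⟩ :=
      exists_single_of_exists_eq_zero hx0 (by simpa using hx1)
    exact hab (hC.eq_of_add_add_eq_zero (h i a ha) (h j b hb) hxC hsum)
  have hfull : #{x ∈ C | ¬ ∃ i, x i = 0} ≤ #({1, -1} : Finset (ZMod 3)) := by
    refine card_le_card_of_injOn (fun x ↦ ∏ i, x i) ?_ ?_
    · intro x hx
      have hprod : ∏ i, x i ≠ 0 :=
        prod_ne_zero_iff.2 fun i _ hi ↦ (mem_filter.1 hx).2 ⟨i, hi⟩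
      simpa [hprod] using zmod_three_cases (∏ i, x i)
    · intro x hx y hy hxy
      by_contra hne
      obtain ⟨hxC, hx⟩ := mem_filter.1 hx
      obtain ⟨hyC, hy⟩ := mem_filter.1 hy
      obtain ⟨i, a, ha, hsum⟩ :=
        exists_single_of_prod_eq (not_exists.1 hx) (not_exists.1 hy) hxy hne
      exact hne (hC.eq_of_add_add_eq_zero hxC hyC (h i a ha) hsum)
  calc #C = #{x ∈ C | ∃ i, x i = 0} + #{x ∈ C | ¬ ∃ i, x i = 0} :=
        (card_filter_add_card_filter_not _).symm
    _ ≤ 6 + 2 := add_le_add ((card_le_card hsingles).trans_eq card_singles) hfull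

theorem IsCap.card_le_eight_of_mem_halfChords {b : Fin 3 → AG 3}
    (hC : IsCap C) (hb : LinearIndependent (ZMod 3) b) (hr : ∀ i, b i ∈ halfChords C r) :
    #C ≤ 8 := by
  obtain ⟨φ, hφ⟩ := exists_affineEquiv hb r
  rw [← C.card_map φ.symm.toEquiv.toEmbedding]
  refine ((isCap_map_iff φ.symm).2 hC).card_le_eight_of_singles_mem fun i a ha ↦ ?_
  refine mem_map_equiv.2 ?_
  change φ (Pi.single i a) ∈ C
  have hφi : φ (Pi.single i a) = r + a • b i := by
    simp [hφ, Pi.single_apply, ite_smul]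
  have hri := mem_halfChords.1 (hr i)
  rw [hφi]
  rcases zmod_three_cases a with rfl | rfl | rfl
  · exact absurd rfl ha
  · simpa using hri.1
  · simpa [← sub_eq_add_neg] using hri.2

theorem IsCap.card_halfChords_le_four (hC : IsCap C) (hcard : 9 ≤ #C) (hr : r ∉ C) :
    #(halfChords C r) ≤ 4 := by
  by_contra! h
  obtain ⟨u, hu, v, hv, huv⟩ := exists_linearIndependent_of_mem_halfChords hr (by lia)
  obtain ⟨w, hw, hwuv⟩ : ∃ w ∈ halfChords C r, w ∉ ({u, -u, v, -v} : Finset (AG 3)) :=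
    exists_mem_notMem_of_card_lt_card (card_le_four.trans_lt h)
  simp only [mem_insert, mem_singleton, not_or] at hwuv
  obtain ⟨hwu, hwu', hwv, hwv'⟩ := hwuv
  have hspan := hC.notMem_span_pair hr hu hv hw huv hwu hwu' hwv hwv'
  have hli : LinearIndependent (ZMod 3) ![w, u, v] :=
    linearIndependent_finCons.2 ⟨huv, by simpa [Set.pair_comm] using hspan⟩
  have hle := hC.card_le_eight_of_mem_halfChords (r := r) hli
    (by simp [Fin.forall_fin_succ, hu, hv, hw])
  lia

theorem IsCap.card_le_nine (hC : IsCap C) : #C ≤ 9 := by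
  by_contra! h
  have hsum := hC.sum_card_halfChords_compl
  have hle : ∑ r ∈ Cᶜ, #(halfChords C r) ≤ #Cᶜ * 4 :=
    sum_le_card_nsmul _ _ _ fun r hr ↦ hC.card_halfChords_le_four h.le (mem_compl.1 hr)
  have hcompl : #Cᶜ + #C = 27 := by simp [card_compl_add_card]
  nlinarith

theorem IsCap.card_halfChords_eq_four (hC : IsCap C) (hcard : #C = 9) (hr : r ∉ C) :
    #(halfChords C r) = 4 := by
  have hsum := hC.sum_card_halfChords_compl
  have hcompl : #Cᶜ + #C = 27 := by simp [card_compl_add_card]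
  have hle : ∀ r ∈ Cᶜ, #(halfChords C r) ≤ 4 :=
    fun r hr ↦ hC.card_halfChords_le_four hcard.ge (mem_compl.1 hr)
  refine (sum_eq_sum_iff_of_le hle).1 ?_ r (mem_compl.2 hr)
  simp only [sum_const, smul_eq_mul]
  rw [hcard] at hsum hcompl
  lia

theorem maximalCap_iff : MaximalCap C ↔ IsCap C ∧ #C = 9 := by
  refine and_congr_right fun hC ↦ ⟨fun h ↦ ?_, fun h D hD ↦ h ▸ hD.card_le_nine⟩
  exact hC.card_le_nine.antisymm (card_paraboloid 0 ▸ h _ (isCap_paraboloid 0))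

/-- The points of `C` on the horizontal plane `z = t`. -/
def layer (C : Finset (AG 3)) (t : ZMod 3) : Finset (AG 3) := {x ∈ C | x 2 = t}

theorem mem_layer : x ∈ layer C t ↔ x ∈ C ∧ x 2 = t := by
  simp [layer]

theorem card_eq_sum_card_layer (C : Finset (AG 3)) :
    #C = #(layer C 0) + #(layer C 1) + #(layer C (-1)) :=
  (card_eq_sum_card_fiberwise fun x _ ↦ mem_coe.2 (mem_univ (x 2))).trans
    (Fin.sum_univ_three fun t ↦ #(layer C t))

theorem linearIndependent_frame (hp : p 2 ≠ 0) :
    LinearIndependent (ZMod 3) ![![1, 0, 0], ![0, 1, 0], p] := by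
  rw [Fintype.linearIndependent_iff]
  intro g hg
  have h0 : g 0 + g 2 * p 0 = 0 := by simpa [Fin.sum_univ_three] using congrFun hg 0
  have h1 : g 1 + g 2 * p 1 = 0 := by simpa [Fin.sum_univ_three] using congrFun hg 1
  have h2 : g 2 = 0 ∨ p 2 = 0 := by simpa [Fin.sum_univ_three] using congrFun hg 2
  have hg2 : g 2 = 0 := h2.resolve_right hp
  rw [hg2, zero_mul, add_zero] at h0 h1
  simp [Fin.forall_fin_succ, h0, h1, hg2]

/-- The four points `(±1, 0)` and `(0, ±1)` of the horizontal plane `z = t`. -/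
def square (t : ZMod 3) : Finset (AG 3) := {![1, 0, t], ![-1, 0, t], ![0, 1, t], ![0, -1, t]}

theorem card_square (t : ZMod 3) : #(square t) = 4 := by
  decide +revert

theorem mem_square_of_coord_eq_zero (hx : x 0 = 0 ∨ x 1 = 0)
    (hxt : x 2 = t) (hne : x ≠ ![0, 0, t]) : x ∈ square t := by
  decide +kernel +revert

theorem IsCap.layer_eq_square (hC : IsCap C) (h : square t ⊆ C) : layer C t = square t := by
  have hu : ![1, 0, 0] ∈ halfChords C ![0, 0, t] :=
    mem_halfChords.2 ⟨h (by simp [square]), h (by simp [square])⟩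
  have hv : ![0, 1, 0] ∈ halfChords C ![0, 0, t] :=
    mem_halfChords.2 ⟨h (by simp [square]), h (by simp [square])⟩
  have huv : LinearIndependent (ZMod 3) ![(![1, 0, 0] : AG 3), ![0, 1, 0]] := by
    rw [LinearIndependent.pair_iff]
    decide
  have hcenter : ![0, 0, t] ∉ C := fun hmem ↦ by simp [hC.halfChords_of_mem hmem] at hu
  refine Subset.antisymm (fun x hx ↦ ?_) fun x hx ↦ mem_layer.2 ⟨h hx, ?_⟩
  · obtain ⟨hxC, rfl⟩ := mem_layer.1 hx
    have hxeq : ![0, 0, x 2] + (x 0 • ![1, 0, 0] + x 1 • ![0, 1, 0]) = x := by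
      ext i; fin_cases i <;> simp
    exact mem_square_of_coord_eq_zero
      (hC.coeff_eq_zero_of_add_mem hu hv huv (hxeq.symm ▸ hxC)) rfl
      fun hx0 ↦ hcenter (hx0 ▸ hxC)
  · simp only [square, mem_insert, mem_singleton] at hx
    rcases hx with rfl | rfl | rfl | rfl <;> rfl

theorem sum_card_halfChords_plane (C : Finset (AG 3)) :
    ∑ r : AG 3 with r 2 = 0, #(halfChords C r) = ∑ t, #(layer C t) * #(layer C (-t)) := by
  rw [sum_card_halfChords, card_eq_sum_card_fiberwise (t := univ)
    (f := fun q : AG 3 × AG 3 ↦ q.1 2) (by simp [Set.MapsTo])]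
  refine sum_congr rfl fun t _ ↦ ?_
  rw [← card_product, filter_filter]
  congr 1
  ext ⟨x, y⟩
  simp only [mem_filter, mem_product, mem_layer, mem_univ, true_and, Pi.neg_apply, Pi.add_apply,
    neg_eq_zero, add_eq_zero_iff_neg_eq]
  grind

theorem IsCap.exists_card_layer_eq_one (hC : IsCap C) (hcard : #C = 9) (h : square 0 ⊆ C) :
    ∃ t ≠ 0, #(layer C t) = 1 := by
  have hlayer := hC.layer_eq_square h
  have hsum : ∑ r : AG 3 with r 2 = 0, #(halfChords C r) = 24 := by
    calc ∑ r : AG 3 with r 2 = 0, #(halfChords C r)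
        = ∑ r : AG 3 with r 2 = 0, if r ∈ square 0 then 1 else 4 := by
          refine sum_congr rfl fun r hr ↦ ?_
          simp only [← hlayer, mem_layer, (mem_filter.1 hr).2, and_true]
          split_ifs with hrC
          · rw [hC.halfChords_of_mem hrC, card_singleton]
          · exact hC.card_halfChords_eq_four hcard hrC
      _ = 24 := by decide +kernel
  have hprod : #(layer C 0) * #(layer C 0) + #(layer C 1) * #(layer C (-1)) +
      #(layer C (-1)) * #(layer C 1) = 24 :=
    (Fin.sum_univ_three fun t ↦ #(layer C t) * #(layer C (-t))).symm.trans
      ((sum_card_halfChords_plane C).symm.trans hsum)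
  have htotal := card_eq_sum_card_layer C
  rw [hlayer, card_square] at hprod htotal
  have hle : #(layer C 1) ≤ 5 := by lia
  -- The layers on both sides have `a + b = 5` points, and `2 * a * b = 24 - 4 * 4`.
  obtain hone | hone : #(layer C 1) = 1 ∨ #(layer C (-1)) = 1 := by
    generalize #(layer C 1) = a at *
    interval_cases a <;> lia
  · exact ⟨1, by decide, hone⟩
  · exact ⟨-1, by decide, hone⟩

theorem neg_mem_square (hx : x ∈ square t) : -x ∈ square (-t) := by
  decide +kernel +revert

theorem add_add_eq_zero_of_mul_eq (hxt : x 2 = t) (hyt : y 2 = t)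
    (hx : x ∉ square t) (hy : y ∉ square t) (hmul : x 0 * x 1 = y 0 * y 1) (hxy : x ≠ y) :
    x + y + ![0, 0, t] = 0 := by
  decide +kernel +revert

theorem height_eq_zero_of_notMem_square (hx2 : x 2 = -1) (hx : x ∉ square (-1))
    (hne : x ≠ ![0, 0, -1]) : height x = 0 := by
  decide +kernel +revert

theorem height_of_mem_square (hx : x ∈ square t) : height x = t - 1 := by
  decide +kernel +revert

theorem IsCap.card_layer_le_three (hC : IsCap C)
    (hsq : Disjoint (layer C t) (square t)) (hcenter : ![0, 0, t] ∈ C) :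
    #(layer C t) ≤ 3 := by
  refine card_le_card_of_injOn (t := (univ : Finset (ZMod 3))) (fun x ↦ x 0 * x 1)
    (by simp [Set.MapsTo]) fun x hx y hy hxy ↦ ?_
  by_contra hne
  obtain ⟨hxC, hxt⟩ := mem_layer.1 hx
  obtain ⟨hyC, hyt⟩ := mem_layer.1 hy
  exact hne <| hC.eq_of_add_add_eq_zero hxC hyC hcenter <|
    add_add_eq_zero_of_mul_eq hxt hyt (disjoint_left.1 hsq hx) (disjoint_left.1 hsq hy) hxy hne

theorem IsCap.eq_paraboloid (hC : IsCap C) (hcard : #C = 9)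
    (h0 : layer C 0 = {0}) (h1 : square 1 ⊆ C) : C = paraboloid 0 := by
  have hlayer := hC.layer_eq_square h1
  have h0C : 0 ∈ C := (mem_layer.1 (h0 ▸ mem_singleton_self _)).1
  have hsq : Disjoint (layer C (-1)) (square (-1)) := by
    refine disjoint_left.2 fun x hx hxsq ↦ ?_
    have hneg : -x ∈ C := h1 (by simpa using neg_mem_square hxsq)
    have hx0 := hC.eq_of_add_add_eq_zero (mem_layer.1 hx).1 h0C hneg (by simp)
    exact absurd (mem_layer.1 hx).2 (by simp [hx0])
  have hcenter : ![0, 0, -1] ∉ C := fun hmem ↦ by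
    have hle := hC.card_layer_le_three hsq hmem
    have htotal := card_eq_sum_card_layer C
    rw [hcard, h0, hlayer, card_singleton, card_square] at htotal
    lia
  refine eq_of_subset_of_card_le (fun x hx ↦ mem_paraboloid.2 ?_)
    (by rw [card_paraboloid, hcard])
  rcases zmod_three_cases (x 2) with h2 | h2 | h2
  · have hx0 : x ∈ layer C 0 := mem_layer.2 ⟨hx, h2⟩
    rw [h0, mem_singleton] at hx0
    simp [hx0, height]
  · have hx1 : x ∈ layer C 1 := mem_layer.2 ⟨hx, h2⟩
    exact (height_of_mem_square (hlayer ▸ hx1)).trans (sub_self 1)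
  · exact height_eq_zero_of_notMem_square h2 (disjoint_left.1 hsq (mem_layer.2 ⟨hx, h2⟩))
      fun h ↦ hcenter (h ▸ hx)

theorem IsCap.exists_square_subset_map (hC : IsCap C) (hcard : #C = 9) :
    ∃ φ : AG 3 ≃ᵃ[ZMod 3] AG 3, square 0 ⊆ C.map φ.toEquiv.toEmbedding := by
  obtain ⟨r, -, hr⟩ : ∃ r ∈ (univ : Finset (AG 3)), r ∉ C :=
    exists_mem_notMem_of_card_lt_card (by simp [hcard])
  have hfour := hC.card_halfChords_eq_four hcard hr
  obtain ⟨u, hu, v, hv, huv⟩ := exists_linearIndependent_of_mem_halfChords hr (by lia)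
  obtain ⟨w, hw⟩ := exists_linearIndependent_snoc_of_lt_finrank huv (by simp)
  obtain ⟨φ, hφ⟩ := exists_affineEquiv hw r
  refine ⟨φ.symm, fun x hx ↦ ?_⟩
  rw [mem_halfChords] at hu hv
  rw [mem_map_symm_iff, hφ]
  simp only [square, mem_insert, mem_singleton] at hx
  rcases hx with rfl | rfl | rfl | rfl <;>
    simp [Fin.sum_univ_castSucc, ← sub_eq_add_neg, hu, hv]

theorem IsCap.exists_map_eq_paraboloid_of_square_subset (hC : IsCap C) (hcard : #C = 9)
    (hsq : square 0 ⊆ C) :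
    ∃ φ : AG 3 ≃ᵃ[ZMod 3] AG 3, C.map φ.toEquiv.toEmbedding = paraboloid 0 := by
  obtain ⟨t, ht, hone⟩ := hC.exists_card_layer_eq_one hcard hsq
  obtain ⟨p, hp⟩ := card_eq_one.1 hone
  obtain rfl : p 2 = t := (mem_layer.1 (hp ▸ mem_singleton_self p)).2
  obtain ⟨φ, hφ⟩ := exists_affineEquiv (linearIndependent_frame (p := -p) (by simpa)) p
  refine ⟨φ.symm, ((isCap_map_iff φ.symm).2 hC).eq_paraboloid (by simpa using hcard) ?_ ?_⟩
  · have hφ0 : φ 0 = p := by simp [hφ]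
    ext x
    have hφ2 : x 2 = 0 ↔ φ x 2 = p 2 := by
      simp [hφ, Fin.sum_univ_three, Matrix.vecHead, Matrix.vecTail, ht]
    rw [mem_layer, mem_map_symm_iff, hφ2, ← mem_layer, hp, mem_singleton, mem_singleton]
    nth_rw 1 [← hφ0]
    exact φ.injective.eq_iff
  · intro x hx
    rw [mem_map_symm_iff, hφ]
    apply hsq
    simp only [square, mem_insert, mem_singleton] at hx ⊢
    rcases hx with rfl | rfl | rfl | rfl <;> simp [Fin.sum_univ_three]

theorem IsCap.exists_map_eq_paraboloid (hC : IsCap C) (hcard : #C = 9) :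
    ∃ φ : AG 3 ≃ᵃ[ZMod 3] AG 3, C.map φ.toEquiv.toEmbedding = paraboloid 0 := by
  obtain ⟨φ, hφ⟩ := hC.exists_square_subset_map hcard
  obtain ⟨ψ, hψ⟩ := ((isCap_map_iff φ).2 hC).exists_map_eq_paraboloid_of_square_subset
    (by simpa using hcard) hφ
  exact ⟨φ.trans ψ, by rw [← hψ, map_map]; rfl⟩

/-- The direction `(a, b)` lifted to the plane tangent at `p` to the paraboloid through `p`. -/
def tangent (p : AG 3) (a b : ZMod 3) : AG 3 := ![a, b, 2 * (p 0 * a + p 1 * b)]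

theorem height_add_tangent (p : AG 3) (a b : ZMod 3) :
    height (p + tangent p a b) = height p - (a ^ 2 + b ^ 2) := by
  simp only [height, tangent, Pi.add_apply, Matrix.cons_val]
  ring

theorem planePoint_tangent (p : AG 3) (a b : ZMod 3) (s : ZMod 3 × ZMod 3) :
    planePoint p (tangent p a b) (tangent p (-b) a) s =
      p + tangent p (s.1 * a - s.2 * b) (s.1 * b + s.2 * a) := by
  ext i
  fin_cases i <;>
    simp only [planePoint, tangent, Pi.add_apply, Pi.smul_apply, smul_eq_mul, Fin.zero_eta,
      Fin.mk_one, Fin.reduceFinMk, Matrix.cons_val] <;>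
    ring

theorem eq_add_tangent (h0 : x 0 = p 0 + a) (h1 : x 1 = p 1 + b)
    (h : height x = height p - (a ^ 2 + b ^ 2)) : x = p + tangent p a b := by
  ext i
  fin_cases i
  · exact h0
  · exact h1
  · change x 2 = p 2 + 2 * (p 0 * a + p 1 * b)
    rw [height, height, h0, h1] at h
    linear_combination h

theorem height_neg_add (hx : height x = c) (hy : height y = c)
    (hxy : (y 0 - x 0) ^ 2 + (y 1 - x 1) ^ 2 = -c) : height (-(x + y)) = 0 := by
  rw [height] at *
  simp only [Pi.neg_apply, Pi.add_apply]
  linear_combination -hx - hy - 2 * hxy - 2 * (x 0 * y 0 + x 1 * y 1) * zmod_three_eq_zero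

theorem IsCap.sub_tangent_mem (hD : IsCap D) (hE : IsCap E)
    (hDE : D ∪ E = (paraboloid 0)ᶜ) (hp : height p = 0) (h : p + tangent p a b ∈ D) :
    p - tangent p a b ∈ D := by
  have hmem (x : AG 3) : x ∈ D ∪ E ↔ height x ≠ 0 := by
    rw [hDE, mem_compl, mem_paraboloid]
  have hab : a ^ 2 + b ^ 2 ≠ 0 := fun h0 ↦
    (hmem _).1 (mem_union_left E h) (by rw [height_add_tangent, hp, h0, sub_zero])
  refine hD.sub_mem_of_add_mem (v := tangent p (-b) a) hE (by simp [hmem, hp]) (fun s hs ↦ ?_) h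
  have hs' : s.1 ^ 2 + s.2 ^ 2 ≠ 0 := fun h0 ↦ hs (Prod.ext_iff.2 (sq_add_sq_eq_zero h0))
  have hheight : height (planePoint p (tangent p a b) (tangent p (-b) a) s) =
      -((s.1 ^ 2 + s.2 ^ 2) * (a ^ 2 + b ^ 2)) := by
    -- `x ^ 2 + y ^ 2` is multiplicative, being the norm of `x + y * i` in the field of order 9.
    rw [planePoint_tangent, height_add_tangent, hp]
    ring
  rw [hmem, hheight]
  exact neg_ne_zero.2 (mul_ne_zero hs' hab)

theorem IsCap.mem_of_sq_add_sq_eq (hD : IsCap D) (hE : IsCap E)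
    (hDE : D ∪ E = (paraboloid 0)ᶜ) (hx : x ∈ D) (hy : height y = height x)
    (hxy : (y 0 - x 0) ^ 2 + (y 1 - x 1) ^ 2 = -height x) : y ∈ D := by
  have hp := height_neg_add rfl hy hxy
  have hxt : x = -(x + y) + tangent (-(x + y)) (y 0 - x 0) (y 1 - x 1) := by
    refine eq_add_tangent ?_ ?_ (by rw [hp, hxy, zero_sub, neg_neg]) <;>
      simp only [Pi.neg_apply, Pi.add_apply]
    · linear_combination x 0 * zmod_three_eq_zero
    · linear_combination x 1 * zmod_three_eq_zero
  have hyt : y = -(x + y) - tangent (-(x + y)) (y 0 - x 0) (y 1 - x 1) := by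
    linear_combination (x + y) * AG.three_eq_zero - hxt
  rw [hyt]
  exact hD.sub_tangent_mem hE hDE hp (hxt ▸ hx)

theorem exists_sq_add_sq_eq_neg (hc : c ≠ 0) (a b : ZMod 3) :
    ∃ i j, i ^ 2 + j ^ 2 = -c ∧ (a - i) ^ 2 + (b - j) ^ 2 = -c := by
  decide +revert

theorem IsCap.paraboloid_subset (hD : IsCap D) (hE : IsCap E)
    (hDE : D ∪ E = (paraboloid 0)ᶜ) (hx : x ∈ D) : paraboloid (height x) ⊆ D := by
  intro z hz
  have hx0 : height x ≠ 0 := by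
    have hxc := hDE ▸ mem_union_left E hx
    rwa [mem_compl, mem_paraboloid] at hxc
  obtain ⟨i, j, hij, hij'⟩ := exists_sq_add_sq_eq_neg hx0 (z 0 - x 0) (z 1 - x 1)
  let y : AG 3 := ![x 0 + i, x 1 + j, height x + (x 0 + i) ^ 2 + (x 1 + j) ^ 2]
  have hy : height y = height x := by
    change height x + (x 0 + i) ^ 2 + (x 1 + j) ^ 2 - (x 0 + i) ^ 2 - (x 1 + j) ^ 2 = height x
    ring
  have hyD : y ∈ D := hD.mem_of_sq_add_sq_eq hE hDE hx hy (by simpa [y] using hij)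
  refine hD.mem_of_sq_add_sq_eq hE hDE hyD ((mem_paraboloid.1 hz).trans hy.symm) ?_
  simpa [y, hy, sub_sub] using hij'

theorem MaximalCap.exists_eq_paraboloid (hD : MaximalCap D) (hE : IsCap E)
    (hDE : D ∪ E = (paraboloid 0)ᶜ) : ∃ c, D = paraboloid c := by
  obtain ⟨hcap, hcard⟩ := maximalCap_iff.1 hD
  obtain ⟨x, hx⟩ : D.Nonempty := card_pos.1 (by lia)
  refine ⟨height x, (eq_of_subset_of_card_le (hcap.paraboloid_subset hE hDE hx) ?_).symm⟩
  rw [hcard, card_paraboloid]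

theorem maximalCap_paraboloid (c : ZMod 3) : MaximalCap (paraboloid c) :=
  maximalCap_iff.2 ⟨isCap_paraboloid c, card_paraboloid c⟩

theorem eq_one_neg_one_of_ne (hc : 0 ≠ c) (hd : 0 ≠ d) (hcd : c ≠ d) :
    (c = 1 ∧ d = -1) ∨ (c = -1 ∧ d = 1) := by
  decide +revert

theorem isCapCompletion_paraboloid_iff {P : Finset (Finset (AG 3))} :
    IsCapCompletion (paraboloid 0) P ↔ P = {paraboloid 1, paraboloid (-1)} := by
  constructor
  · intro hP
    obtain ⟨D, E, hne, rfl⟩ := card_eq_two.1 hP.1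
    obtain ⟨hD, hE, hD0, hE0, hDE, hcover⟩ := (isCapCompletion_pair hne).1 hP
    have hcompl : D ∪ E = (paraboloid 0)ᶜ :=
      (IsCompl.compl_eq ⟨disjoint_union_right.2 ⟨hD0, hE0⟩, codisjoint_iff.2 hcover⟩).symm
    obtain ⟨c, rfl⟩ := hD.exists_eq_paraboloid hE.1 hcompl
    obtain ⟨d, rfl⟩ := hE.exists_eq_paraboloid hD.1 (by rwa [union_comm])
    rw [disjoint_paraboloid_iff] at hD0 hE0 hDE
    rcases eq_one_neg_one_of_ne hD0 hE0 hDE with ⟨rfl, rfl⟩ | ⟨rfl, rfl⟩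
    · rfl
    · exact pair_comm _ _
  · rintro rfl
    have hdisj : Disjoint (paraboloid 1) (paraboloid (-1)) :=
      disjoint_paraboloid_iff.2 (by decide)
    have hne : paraboloid 1 ≠ paraboloid (-1) :=
      hdisj.ne (card_pos.1 (by simp [card_paraboloid])).ne_empty
    exact (isCapCompletion_pair hne).2 ⟨maximalCap_paraboloid 1, maximalCap_paraboloid (-1),
      disjoint_paraboloid_iff.2 (by decide), disjoint_paraboloid_iff.2 (by decide), hdisj,
      union_paraboloid⟩

theorem MaximalCap.existsUnique_isCapCompletion (hC : MaximalCap C) :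
    ∃! P, IsCapCompletion C P := by
  obtain ⟨φ, hφ⟩ := hC.1.exists_map_eq_paraboloid (maximalCap_iff.1 hC).2
  refine (φ.toEquiv.finsetCongr.finsetCongr.existsUnique_congr
    (q := (· = {paraboloid 1, paraboloid (-1)})) fun P ↦ ?_).2 existsUnique_eq
  rw [← isCapCompletion_paraboloid_iff, ← hφ, isCapCompletion_map_iff]

end AffineThreeSpace

/-- `AG(3,3)` can be partitioned into three pairwise disjoint maximal caps; moreover every
maximal cap of `AG(3,3)` lies in a unique such partition: there is exactly one unordered
pair `{D, E}` of maximal caps such that `C`, `D`, `E` are pairwise disjoint and cover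
everything. -/
theorem AG33_partition_into_three_maximal_caps :
    (∃ A B C : Finset (Fin 3 → ZMod 3),
      MaximalCap A ∧ MaximalCap B ∧ MaximalCap C ∧
      Disjoint A B ∧ Disjoint A C ∧ Disjoint B C ∧
      A ∪ B ∪ C = Finset.univ) ∧
    ∀ C : Finset (Fin 3 → ZMod 3), MaximalCap C →
      ∃! P : Finset (Finset (Fin 3 → ZMod 3)),
        P.card = 2 ∧
        (∀ D ∈ P, MaximalCap D ∧ Disjoint C D) ∧
        (∀ D ∈ P, ∀ E ∈ P, D ≠ E → Disjoint D E) ∧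
        C ∪ P.sup id = Finset.univ := by
  refine ⟨⟨paraboloid 0, paraboloid 1, paraboloid (-1), maximalCap_paraboloid _,
    maximalCap_paraboloid _, maximalCap_paraboloid _, ?_, ?_, ?_, ?_⟩,
    fun C hC ↦ hC.existsUnique_isCapCompletion⟩
  · exact disjoint_paraboloid_iff.2 (by decide)
  · exact disjoint_paraboloid_iff.2 (by decide)
  · exact disjoint_paraboloid_iff.2 (by decide)
  · rw [union_assoc, union_paraboloid]
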